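/- Let Λ be an abelian group containing Kˣ as a subgroup such that Λ/Kˣ is a free abelian group of finite rank, and let V be a valuative submonoid of Λ which dominates the valuative submonoid V₀ := A∖{0} of Kˣ. Let R := A ⊗_{ℤ[V₀]} ℤ[V] and let 𝔭 be the ideal of R generated by the image of V∖Vˣ in R. Then the local ring R_𝔭 is a valuation ring whose value group is isomorphic, as an ordered abelian group, to Λ/Vˣ (totally ordered with nonnegative cone the image of V), and whose residue field is isomorphic as a k-algebra to the rational function field k(U₁, …, Uₙ) in n variables over k, where n is the rank of the free abelian group Vˣ/Aˣ (note Vˣ ∩ Kˣ = Aˣ, so Vˣ/Aˣ embeds into Λ/Kˣ and is free of finite rank). -/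

import Mathlib

set_option synthInstance.maxHeartbeats 400000
open scoped TensorProduct

/-!
Write `ι v = 1 ⊗ v` for `v ∈ V`, a multiplicative map into `R = A ⊗ ℤ[V]`. If `v` and `w` lie in
the same class of `Λ / Kˣ`, then `ι v + ι w` is `0` or again of the form `ι t` with `t` in that
class, because `A` is a valuation ring. As the `ι v` generate `R` additively, every nonzero element
of `R` is a sum of finitely many `ι v` with distinct classes; since `V` is valuative, one of these
`v` divides all the others, so the element is `ι v * y` with `1` among the terms of `y`. A sum of
terms with distinct classes is never `0`, so each `ι v` is a nonzerodivisor.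

A splitting of `Vˣ → Vˣ / Aˣ` gives a character of `Vˣ` which extends the reduction `Aˣ → kˣ` and
sends a basis of the quotient to variables. Extended by `0` on `V ∖ Vˣ`, it defines a homomorphism
`φ : R → k(U)`, where `k(U)` is generated by the image of `φ`. Its value at `y` above is a sum of
scalar multiples of distinct Laurent monomials, one of which is `1`, so it is nonzero. Hence
`𝔭 = ker φ`, the residue field of `R_𝔭` is `k(U)`, and every nonzero element of `R_𝔭` is a unit
times some `ι v`, which yields the valuation ring and its value group `Λ / Vˣ`.
-/

section LaurentMonomial

variable (σ k : Type*) [Field k]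

/-- The Laurent monomial `∏ i, X i ^ e i` with exponent `e`, as a unit of the rational function
field. -/
noncomputable def laurentMonomial :
    Multiplicative (σ →₀ ℤ) →* (FractionRing (MvPolynomial σ k))ˣ where
  toFun e := e.toAdd.prod fun i n =>
    Units.mk0 (algebraMap (MvPolynomial σ k) (FractionRing (MvPolynomial σ k)) (.X i))
      (by simp) ^ n
  map_one' := Finsupp.prod_zero_index
  map_mul' e e' := Finsupp.prod_add_index' (fun _ => zpow_zero _) fun _ _ _ => zpow_add _ _ _

variable {σ k}

lemma laurentMonomial_natCast (d : σ →₀ ℕ) :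
    (laurentMonomial σ k (.ofAdd (d.mapRange Nat.cast Nat.cast_zero)) :
        FractionRing (MvPolynomial σ k)) =
      algebraMap (MvPolynomial σ k) _ (.monomial d 1) := by
  rw [MvPolynomial.monomial_eq, map_one, one_mul, map_finsuppProd]
  simp only [laurentMonomial, MonoidHom.coe_mk, OneHom.coe_mk, toAdd_ofAdd]
  rw [Finsupp.prod_mapRange_index fun _ => zpow_zero _]
  simp [Finsupp.prod]

lemma laurentMonomial_single (i : σ) :
    (laurentMonomial σ k (.ofAdd (.single i 1)) : FractionRing (MvPolynomial σ k)) =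
      algebraMap (MvPolynomial σ k) _ (.X i) := by
  simp [laurentMonomial]

lemma exists_natCast_eq_add (s : Finset (σ →₀ ℤ)) :
    ∃ d : σ →₀ ℕ, ∀ e ∈ s, ∃ c : σ →₀ ℕ,
      c.mapRange Nat.cast Nat.cast_zero = e + d.mapRange Nat.cast Nat.cast_zero := by
  let d : σ →₀ ℕ := s.sup fun e => e.mapRange (fun n => (-n).toNat) rfl
  refine ⟨d, fun e he =>
    ⟨(e + d.mapRange Nat.cast Nat.cast_zero).mapRange Int.toNat rfl, ?_⟩⟩
  ext i
  have hle : e.mapRange (fun n => (-n).toNat) rfl ≤ d :=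
    Finset.le_sup (f := fun e : σ →₀ ℤ => e.mapRange (fun n => (-n).toNat) rfl) he
  have hi : (-e i).toNat ≤ d i := hle i
  simp only [Finsupp.mapRange_apply, Finsupp.add_apply]
  lia

lemma linearIndependent_laurentMonomial :
    LinearIndependent k fun e => (laurentMonomial σ k e : FractionRing (MvPolynomial σ k)) := by
  rw [linearIndependent_iff_finset_linearIndependent]
  intro s
  obtain ⟨d, hd⟩ := exists_natCast_eq_add (s.map Multiplicative.toAdd.toEmbedding)
  choose c hc using fun e : s => hd e.1.toAdd (Finset.mem_map_of_mem _ e.2)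
  have hc_inj : Function.Injective c := fun e e' h => by
    have := add_right_cancel ((hc e).symm.trans (h ▸ hc e'))
    exact Subtype.ext (Multiplicative.toAdd.injective this)
  have hmonomials : LinearIndependent k fun e : s =>
      algebraMap (MvPolynomial σ k) (FractionRing (MvPolynomial σ k)) (.monomial (c e) 1) := by
    have := (MvPolynomial.basisMonomials σ k).linearIndependent.comp c hc_inj
    simpa [Function.comp_def] using this.map'
      (IsScalarTower.toAlgHom k _ (FractionRing (MvPolynomial σ k))).toLinearMap
      (LinearMap.ker_eq_bot.mpr (FaithfulSMul.algebraMap_injective _ _))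
  refine .of_comp (LinearMap.mulRight k (laurentMonomial σ k
    (.ofAdd (d.mapRange Nat.cast Nat.cast_zero)) : FractionRing (MvPolynomial σ k))) ?_
  convert! hmonomials using 2 with e
  rw [← laurentMonomial_natCast, hc e, ofAdd_add, map_mul, Units.val_mul]
  rfl

lemma sum_algebraMap_mul_laurentMonomial_ne_zero {ι : Type*} {s : Finset ι} (hs : s.Nonempty)
    (c : ι → kˣ) {e : ι → Multiplicative (σ →₀ ℤ)} (he : Set.InjOn e s) :
    ∑ i ∈ s, algebraMap k (FractionRing (MvPolynomial σ k)) (c i) * laurentMonomial σ k (e i) ≠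
      0 := by
  obtain ⟨i, hi⟩ := hs
  intro hsum
  have hindep : LinearIndepOn k
      (fun i => (laurentMonomial σ k (e i) : FractionRing (MvPolynomial σ k))) s :=
    linearIndependent_laurentMonomial.comp _ he.injective
  simp only [← Algebra.smul_def] at hsum
  exact (c i).ne_zero (linearIndepOn_finset_iff.mp hindep _ hsum i hi)

lemma sum_ne_zero_of_eq_algebraMap_mul_laurentMonomial {M N : Type*} {i : N → M}
    (hi : Function.Injective i) {ψ : M → FractionRing (MvPolynomial σ k)}
    {e : N → Multiplicative (σ →₀ ℤ)}
    (hψ : ∀ w, ∃ c : kˣ, ψ (i w) = algebraMap k _ c * laurentMonomial σ k (e w))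
    (hψ_zero : ∀ v ∉ Set.range i, ψ v = 0) {s : Finset M} {w : N} (hw : i w ∈ s)
    (he : Set.InjOn e (i ⁻¹' s)) : ∑ v ∈ s, ψ v ≠ 0 := by
  choose c hc using hψ
  rw [← Finset.sum_preimage i s hi.injOn ψ fun v _ => hψ_zero v]
  simp only [hc]
  exact sum_algebraMap_mul_laurentMonomial_ne_zero ⟨w, Finset.mem_preimage.mpr hw⟩ c
    (by simpa using he)

lemma subfield_eq_top_of_algebraMap_mem_of_laurentMonomial_mem
    {S : Subfield (FractionRing (MvPolynomial σ k))} (hk : ∀ c : k, algebraMap k _ c ∈ S)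
    (hX : ∀ e, (laurentMonomial σ k e : FractionRing (MvPolynomial σ k)) ∈ S) : S = ⊤ := by
  have hpoly (p : MvPolynomial σ k) : algebraMap _ (FractionRing (MvPolynomial σ k)) p ∈ S := by
    induction p using MvPolynomial.induction_on with
    | C c => exact hk c
    | add p q hp hq => simpa using add_mem hp hq
    | mul_X p i hp => simpa [laurentMonomial_single] using mul_mem hp (hX (.ofAdd (.single i 1)))
  refine eq_top_iff.mpr fun x _ => ?_
  obtain ⟨p, q, -, rfl⟩ := IsFractionRing.div_surjective (A := MvPolynomial σ k) x
  exact div_mem (hpoly p) (hpoly q)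

end LaurentMonomial

lemma exists_leftInverse_of_quotient_equiv_free {G H σ : Type*} [CommGroup G] [CommGroup H]
    {j : H →* G} (hj : Function.Injective j)
    (e : G ⧸ j.range ≃* Multiplicative (σ →₀ ℤ)) : ∃ q : G →* H, ∀ h, q (j h) = h := by
  let i : Additive H →ₗ[ℤ] Additive G := (MonoidHom.toAdditive j).toIntLinearMap
  let π : G →* Multiplicative (σ →₀ ℤ) := e.toMonoidHom.comp (QuotientGroup.mk' j.range)
  have hπ : Function.Surjective π := e.surjective.comp (QuotientGroup.mk'_surjective _)
  let p : Additive G →ₗ[ℤ] (σ →₀ ℤ) := (MonoidHom.toAdditiveLeft π).toIntLinearMap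
  have hexact : Function.Exact i p := fun g => by
    change e (QuotientGroup.mk g.toMul) = 1 ↔ _
    rw [map_eq_one_iff e e.injective, QuotientGroup.eq_one_iff]
    rfl
  obtain ⟨q, hq⟩ := ((hexact.split_tfae hj hπ).out 0 1).mp
    (p.exists_rightInverse_of_surjective (LinearMap.range_eq_top.mpr hπ))
  exact ⟨MonoidHom.toAdditive.symm q.toAddMonoidHom, fun h => congr($hq (.ofMul h))⟩

lemma exists_monoidHom_extending_eq_mul_laurentMonomial {G H k σ : Type*} [CommGroup G]
    [CommGroup H] [Field k] {j : H →* G} (hj : Function.Injective j) {N : Subgroup G}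
    (hN : j.range = N) (e : G ⧸ N ≃* Multiplicative (σ →₀ ℤ)) (χ : H →* kˣ) :
    ∃ Φ : G →* (FractionRing (MvPolynomial σ k))ˣ,
      (∀ h, (Φ (j h) : FractionRing (MvPolynomial σ k)) = algebraMap k _ (χ h)) ∧
      ∀ g : G, ∃ c : kˣ, (Φ g : FractionRing (MvPolynomial σ k)) =
        algebraMap k _ c * laurentMonomial σ k (e g) := by
  subst hN
  obtain ⟨q, hq⟩ := exists_leftInverse_of_quotient_equiv_free hj e
  let Φ : G →* (FractionRing (MvPolynomial σ k))ˣ :=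
    (Units.map (algebraMap k _).toMonoidHom).comp (χ.comp q) *
      (laurentMonomial σ k).comp (e.toMonoidHom.comp (QuotientGroup.mk' j.range))
  have hΦ (g : G) : (Φ g : FractionRing (MvPolynomial σ k)) =
    algebraMap k _ (χ (q g)) * laurentMonomial σ k (e g) := rfl
  refine ⟨Φ, fun h => ?_, fun g => ⟨χ (q g), rfl⟩⟩
  have hjh : (j h : G ⧸ j.range) = 1 := (QuotientGroup.eq_one_iff _).mpr ⟨h, rfl⟩
  simp [hΦ, hq, hjh]

section NormalForm

lemma exists_mem_forall_dvd {M : Type*} [CommMonoid M] [Std.Total (α := M) (· ∣ ·)]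
    {s : Finset M} (hs : s.Nonempty) : ∃ v ∈ s, ∀ w ∈ s, v ∣ w := by
  obtain ⟨v, hv, hmin⟩ := s.finite_toSet.exists_minimalFor Associates.mk _ hs
  exact ⟨v, hv, fun w hw => (Std.Total.total (r := (· ∣ ·)) v w).elim id fun hwv =>
    Associates.mk_le_mk_iff_dvd.mp (hmin hw (Associates.mk_le_mk_iff_dvd.mpr hwv))⟩

lemma exists_injOn_eq_sum {M G R : Type*} [AddCommMonoid R] {ι : M → R} {π : M → G}
    (hgen : AddSubmonoid.closure (Set.range ι) = ⊤)
    (hadd : ∀ v w, π v = π w → ι v + ι w = 0 ∨ ∃ t, π t = π v ∧ ι v + ι w = ι t) (r : R) :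
    ∃ s : Finset M, Set.InjOn π s ∧ r = ∑ v ∈ s, ι v := by
  classical
  have hr : r ∈ AddSubmonoid.closure (Set.range ι) := hgen ▸ AddSubmonoid.mem_top r
  induction hr using AddSubmonoid.closure_induction_left with
  | zero => exact ⟨∅, by simp, by simp⟩
  | add_left _ hv r _ ih =>
    obtain ⟨v, rfl⟩ := hv
    obtain ⟨s, hs, rfl⟩ := ih
    have hinsert {t : M} {s' : Finset M} (hs' : Set.InjOn π s') (ht : ∀ w ∈ s', π w ≠ π t) :
        ∃ s : Finset M, Set.InjOn π s ∧ ι t + ∑ w ∈ s', ι w = ∑ w ∈ s, ι w := by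
      have hts' : t ∉ s' := fun h => ht t h rfl
      refine ⟨insert t s', ?_, (Finset.sum_insert hts').symm⟩
      rw [Finset.coe_insert, Set.injOn_insert (by simpa using hts')]
      exact ⟨hs', fun ⟨w, hw, hwt⟩ => ht w hw hwt⟩
    by_cases h : ∃ w ∈ s, π w = π v
    · obtain ⟨w, hw, hwv⟩ := h
      have hs' : Set.InjOn π (s.erase w) := hs.mono (Finset.erase_subset w s)
      rw [← Finset.add_sum_erase s ι hw, ← add_assoc]
      obtain h0 | ⟨t, ht, hvw⟩ := hadd v w hwv.symm
      · exact ⟨s.erase w, hs', by rw [h0, zero_add]⟩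
      · rw [hvw]
        refine hinsert hs' fun x hx hxt => Finset.ne_of_mem_erase hx ?_
        exact hs (Finset.mem_of_mem_erase hx) hw (hxt.trans (ht.trans hwv.symm))
    · push Not at h
      exact hinsert hs h

lemma exists_sum_eq_mul_sum {M G R : Type*} [CommMonoid M] [IsLeftCancelMul M]
    [Std.Total (α := M) (· ∣ ·)] [Group G] [Semiring R] (ι : M →* R) {π : M →* G}
    {s : Finset M} (hs : s.Nonempty) (hπ : Set.InjOn π s) :
    ∃ (v : M) (t : Finset M), 1 ∈ t ∧ Set.InjOn π t ∧ ∑ w ∈ s, ι w = ι v * ∑ w ∈ t, ι w := by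
  classical
  obtain ⟨v, hv, hdvd⟩ := exists_mem_forall_dvd hs
  choose! q hq using hdvd
  have hπq : Set.InjOn (π ∘ q) s := fun w hw w' hw' h => hπ hw hw' <| by
    rw [hq w hw, hq w' hw', map_mul, map_mul]
    exact congr_arg (π v * ·) h
  refine ⟨v, s.image q, Finset.mem_image.mpr ⟨v, hv, mul_eq_left.mp (hq v hv).symm⟩, ?_, ?_⟩
  · rw [Finset.coe_image]
    exact hπq.image_of_comp
  · rw [Finset.sum_image hπq.of_comp, Finset.mul_sum]
    exact Finset.sum_congr rfl fun w hw => by rw [← map_mul, ← hq w hw]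

lemma eq_zero_or_eq_mul_of_forall_sum_ne_zero {M G R L : Type*} [CommMonoid M] [IsLeftCancelMul M]
    [Std.Total (α := M) (· ∣ ·)] [Group G] [Semiring R] [Semiring L] {ι : M →* R} {π : M →* G}
    (hgen : AddSubmonoid.closure (Set.range ι) = ⊤)
    (hadd : ∀ v w, π v = π w → ι v + ι w = 0 ∨ ∃ t, π t = π v ∧ ι v + ι w = ι t) {φ : R →+* L}
    (hφ : ∀ s : Finset M, 1 ∈ s → Set.InjOn π s → ∑ w ∈ s, φ (ι w) ≠ 0) (r : R) :
    r = 0 ∨ ∃ v y, φ y ≠ 0 ∧ r = ι v * y := by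
  obtain ⟨s, hs, rfl⟩ := exists_injOn_eq_sum hgen hadd r
  obtain rfl | hne := s.eq_empty_or_nonempty
  · exact .inl Finset.sum_empty
  · obtain ⟨v, t, ht, hπt, hst⟩ := exists_sum_eq_mul_sum ι hne hs
    exact .inr ⟨v, _, by simpa using hφ t ht hπt, hst⟩

lemma mem_nonZeroDivisors_of_forall_sum_ne_zero {M G R : Type*} [CommMonoid M] [IsLeftCancelMul M]
    [Group G] [CommRing R] {ι : M →* R} {π : M →* G} (hgen : AddSubmonoid.closure (Set.range ι) = ⊤)
    (hadd : ∀ v w, π v = π w → ι v + ι w = 0 ∨ ∃ t, π t = π v ∧ ι v + ι w = ι t)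
    (hsum : ∀ s : Finset M, s.Nonempty → Set.InjOn π s → ∑ w ∈ s, ι w ≠ 0) (v : M) :
    ι v ∈ nonZeroDivisors R := by
  refine mem_nonZeroDivisors_iff_right.mpr fun r hr => ?_
  obtain ⟨s, hs, rfl⟩ := exists_injOn_eq_sum hgen hadd r
  obtain rfl | hne := s.eq_empty_or_nonempty
  · exact Finset.sum_empty
  · refine absurd ?_ (hsum (s.map (mulLeftEmbedding v)) (hne.map) ?_)
    · simpa [Finset.mul_sum, mul_comm] using hr
    · rw [Finset.coe_map]
      refine Set.InjOn.image_of_comp fun w hw w' hw' h => hs hw hw' ?_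
      simpa using h

lemma ker_eq_span_of_eq_zero_or_eq_mul {M R L : Type*} [Monoid M] [CommRing R] [CommRing L]
    {ι : M →* R} {φ : R →+* L} (hφ : ∀ v, ¬IsUnit v → φ (ι v) = 0)
    (hfactor : ∀ r, r = 0 ∨ ∃ v y, φ y ≠ 0 ∧ r = ι v * y) :
    RingHom.ker φ = Ideal.span {r | ∃ v, ¬IsUnit v ∧ r = ι v} := by
  refine le_antisymm (fun r hr => ?_) (Ideal.span_le.mpr ?_)
  · obtain rfl | ⟨v, y, hy, rfl⟩ := hfactor r
    · exact zero_mem _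
    · refine Ideal.mul_mem_right _ _ (Ideal.subset_span ⟨v, fun hv => hy ?_, rfl⟩)
      rwa [RingHom.mem_ker, map_mul, ((hv.map ι).map φ).mul_right_eq_zero] at hr
  · rintro _ ⟨v, hv, rfl⟩
    exact hφ v hv

end NormalForm

section ValuativeSubmonoid

variable {Λ : Type*} [CommGroup Λ] {V : Submonoid Λ}

lemma isUnit_iff_inv_mem (v : V) : IsUnit v ↔ (v : Λ)⁻¹ ∈ V := by
  refine ⟨fun h => ?_, fun h => .of_mul_eq_one ⟨_, h⟩ (Subtype.ext (mul_inv_cancel (v : Λ)))⟩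
  obtain ⟨w, hw⟩ := h.exists_right_inv
  rw [inv_eq_of_mul_eq_one_right congr(($hw : Λ))]
  exact w.2

lemma isUnit_iff_mem {W : Subgroup Λ} (hW : ∀ x, x ∈ W ↔ x ∈ V ∧ x⁻¹ ∈ V) (v : V) :
    IsUnit v ↔ (v : Λ) ∈ W := by
  rw [isUnit_iff_inv_mem, hW, and_iff_right v.2]

lemma total_dvd_of_mem_or_inv_mem (hV : ∀ x, x ∈ V ∨ x⁻¹ ∈ V) : Std.Total (α := V) (· ∣ ·) where
  total v w := by
    refine (hV ((v : Λ)⁻¹ * w)).imp (fun h => ⟨⟨_, h⟩, ?_⟩) fun h => ⟨⟨_, h⟩, ?_⟩ <;>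
      exact Subtype.ext (by simp)

lemma exists_monoidHom_extending {H : Type*} [CommGroup H] (hV : ∀ x, x ∈ V ∨ x⁻¹ ∈ V)
    (g : V →* H) : ∃ γ : Λ →* H, ∀ v : V, γ v = g v := by
  let loc : (⊤ : Submonoid V).LocalizationMap Λ := V.subtype.toLocalizationMap
    (fun _ => Group.isUnit _) (fun x => ?_) fun v w h => ⟨1, by simpa using h⟩
  · exact ⟨loc.lift fun _ => Group.isUnit _, fun v => loc.lift_eq _ v⟩
  · obtain h | h := hV x
    · exact ⟨⟨⟨x, h⟩, 1⟩, by simp⟩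
    · exact ⟨⟨1, ⟨⟨x⁻¹, h⟩, trivial⟩⟩, by simp⟩

end ValuativeSubmonoid

section ValuationRing

variable {M O : Type*} [Monoid M] [CommRing O]

lemma isDomain_of_associated_monoidHom [Nontrivial O] {ι : M →* O} (hι : ∀ v, ι v ≠ 0)
    (hassoc : ∀ x, x ≠ 0 → ∃ v, Associated x (ι v)) : IsDomain O := by
  have : NoZeroDivisors O := ⟨fun {x y} hxy => by
    contrapose! hxy
    obtain ⟨v, hv⟩ := hassoc x hxy.1
    obtain ⟨w, hw⟩ := hassoc y hxy.2
    rw [(hv.mul_mul hw).ne_zero_iff, ← map_mul]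
    exact hι _⟩
  exact NoZeroDivisors.to_isDomain O

lemma valuationRing_of_associated_monoidHom [IsDomain O] [Std.Total (α := M) (· ∣ ·)] {ι : M →* O}
    (hassoc : ∀ x, x ≠ 0 → ∃ v, Associated x (ι v)) : ValuationRing O := by
  refine ValuationRing.iff_dvd_total.mpr ⟨fun x y => ?_⟩
  obtain rfl | hx := eq_or_ne x 0
  · exact .inr (dvd_zero y)
  obtain rfl | hy := eq_or_ne y 0
  · exact .inl (dvd_zero x)
  obtain ⟨v, hv⟩ := hassoc x hx
  obtain ⟨w, hw⟩ := hassoc y hy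
  rw [hv.dvd_iff_dvd_left, hw.dvd_iff_dvd_right, hv.dvd_iff_dvd_right, hw.dvd_iff_dvd_left]
  exact (Std.Total.total (r := (· ∣ ·)) v w).imp (map_dvd ι) (map_dvd ι)

variable {Λ : Type*} [CommGroup Λ] {V : Submonoid Λ}

lemma exists_algebraMap_eq_iff_mem {F : Type*} [CommRing F] [Algebra O F]
    [FaithfulSMul O F] (hV : ∀ x, x ∈ V ∨ x⁻¹ ∈ V) (ι : V →* O) [IsLocalHom ι] {γ : Λ →* Fˣ}
    (hγ : ∀ v : V, (γ v : F) = algebraMap O F (ι v)) (x : Λ) :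
    (∃ r, algebraMap O F r = γ x) ↔ x ∈ V := by
  refine ⟨fun ⟨r, hr⟩ => (hV x).elim id fun hx => ?_, fun hx => ⟨ι ⟨x, hx⟩, (hγ ⟨x, hx⟩).symm⟩⟩
  have hmul : ι ⟨x⁻¹, hx⟩ * r = 1 := by
    apply FaithfulSMul.algebraMap_injective O F
    rw [map_mul, hr, ← hγ, ← Units.val_mul, ← map_mul, inv_mul_cancel, map_one, map_one,
      Units.val_one]
  have hunit := isUnit_of_map_unit ι _ (.of_mul_eq_one r hmul)
  simpa using (isUnit_iff_inv_mem _).mp hunit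

lemma exists_units_map_mul_eq {F : Type*} [Field F] [IsDomain O] [ValuationRing O] [Algebra O F]
    [IsFractionRing O F] {ι : V →* O} (hassoc : ∀ x, x ≠ 0 → ∃ v, Associated x (ι v))
    {γ : Λ →* Fˣ} (hγ : ∀ v : V, (γ v : F) = algebraMap O F (ι v)) (y : Fˣ) :
    ∃ (x : Λ) (u : Oˣ), γ x = y * Units.map (algebraMap O F).toMonoidHom u := by
  have hint (y : Fˣ) (r : O) (hr : algebraMap O F r = y) :
      ∃ (x : Λ) (u : Oˣ), γ x = y * Units.map (algebraMap O F).toMonoidHom u := by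
    have hr0 : r ≠ 0 := fun h => y.ne_zero (by rw [← hr, h, map_zero])
    obtain ⟨v, u, hu⟩ := hassoc r hr0
    exact ⟨v, u, Units.ext (by simp [hγ, ← hu, hr])⟩
  obtain ⟨r, hr⟩ | ⟨r, hr⟩ := ValuationRing.isInteger_or_isInteger O (y : F)
  · exact hint y r hr
  · obtain ⟨x, u, hx⟩ := hint y⁻¹ r (hr.trans (Units.val_inv_eq_inv_val y).symm)
    exact ⟨x⁻¹, u⁻¹, by rw [map_inv, hx, mul_inv, inv_inv, map_inv]⟩

lemma mem_range_units_map_algebraMap_iff {F : Type*} [CommRing F] [Algebra O F] [FaithfulSMul O F]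
    {x : Fˣ} :
    x ∈ (Units.map (algebraMap O F).toMonoidHom).range ↔
      (∃ r, algebraMap O F r = x) ∧ ∃ r, algebraMap O F r = (x⁻¹ : Fˣ) := by
  refine ⟨?_, fun ⟨⟨r, hr⟩, s, hs⟩ => ?_⟩
  · rintro ⟨u, rfl⟩
    exact ⟨⟨u, rfl⟩, (u⁻¹ : Oˣ), rfl⟩
  · have hrs : r * s = 1 := FaithfulSMul.algebraMap_injective O F (by simp [hr, hs])
    exact ⟨.mkOfMulEqOne r s hrs, Units.ext hr⟩

lemma exists_valueGroup_equiv {F : Type*} [Field F] [IsDomain O] [ValuationRing O] [Algebra O F]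
    [IsFractionRing O F] (hV : ∀ x, x ∈ V ∨ x⁻¹ ∈ V) (ι : V →* O) [IsLocalHom ι]
    (hι : ∀ v, ι v ≠ 0) (hassoc : ∀ x, x ≠ 0 → ∃ v, Associated x (ι v)) {W : Subgroup Λ}
    (hW : ∀ x, x ∈ W ↔ x ∈ V ∧ x⁻¹ ∈ V) :
    ∃ ψ : (Fˣ ⧸ (Units.map (algebraMap O F).toMonoidHom).range) ≃* Λ ⧸ W, ∀ x : Fˣ,
      (∃ r, algebraMap O F r = x) ↔ ∃ v ∈ V, (v : Λ ⧸ W) = ψ x := by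
  set U := (Units.map (algebraMap O F).toMonoidHom).range
  obtain ⟨γ, hγ⟩ := exists_monoidHom_extending hV
    (IsUnit.liftRight ((algebraMap O F).toMonoidHom.comp ι) fun v => by simp [hι])
  replace hγ (v : V) : (γ v : F) = algebraMap O F (ι v) := congr_arg Units.val (hγ v)
  have hint := exists_algebraMap_eq_iff_mem hV ι hγ
  have hintU {x y : Fˣ} (hxy : (x : Fˣ ⧸ U) = y) (hx : ∃ r, algebraMap O F r = x) :
      ∃ r, algebraMap O F r = y := by
    obtain ⟨r, hr⟩ := hx
    obtain ⟨s, hs⟩ := (mem_range_units_map_algebraMap_iff.mp (QuotientGroup.eq.mp hxy)).1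
    exact ⟨r * s, by simp [hr, hs]⟩
  have hker : W = ((QuotientGroup.mk' U).comp γ).ker := by
    ext x
    rw [hW, MonoidHom.mem_ker, MonoidHom.comp_apply, QuotientGroup.mk'_apply,
      QuotientGroup.eq_one_iff, mem_range_units_map_algebraMap_iff, ← map_inv, hint, hint]
  have hsurj : Function.Surjective ((QuotientGroup.mk' U).comp γ) := fun y => by
    obtain ⟨y, rfl⟩ := QuotientGroup.mk_surjective y
    obtain ⟨x, u, hx⟩ := exists_units_map_mul_eq hassoc hγ y
    exact ⟨x, (QuotientGroup.eq.mpr (show y⁻¹ * γ x ∈ U from ⟨u, by simp [hx]⟩)).symm⟩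
  refine ⟨(QuotientGroup.liftEquiv W hsurj hker).symm, fun x => ?_⟩
  obtain ⟨y, hy⟩ := hsurj x
  have hψ : (QuotientGroup.liftEquiv W hsurj hker).symm (x : Fˣ ⧸ U) = (y : Λ ⧸ W) :=
    (MulEquiv.symm_apply_eq _).mpr hy.symm
  rw [hψ]
  refine ⟨fun hx => ⟨y, (hint y).mp (hintU hy.symm hx), rfl⟩, fun ⟨v, hv, hvy⟩ => ?_⟩
  have hγvx : (γ v : Fˣ ⧸ U) = x := (congr_arg (QuotientGroup.liftEquiv W hsurj hker) hvy).trans hy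
  exact hintU hγvx ((hint v).mpr hv)

end ValuationRing

section Localization

variable {R : Type*} [CommRing R] {P : Ideal R} [P.IsPrime]

lemma exists_associated_of_isLocalization_atPrime {M O : Type*} [CommRing O] [Algebra R O]
    [IsLocalization.AtPrime O P] {ι : M → R} (hfactor : ∀ r, r = 0 ∨ ∃ v, ∃ y ∉ P, r = ι v * y)
    {x : O} (hx : x ≠ 0) : ∃ v, Associated x (algebraMap R O (ι v)) := by
  obtain ⟨r, s, rfl⟩ := IsLocalization.exists_mk'_eq P.primeCompl x
  obtain rfl | ⟨v, y, hy, rfl⟩ := hfactor r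
  · simp at hx
  · rw [← IsLocalization.mul_mk'_eq_mk'_of_mul]
    exact ⟨v, associated_mul_unit_left _ _
      ((IsLocalization.AtPrime.isUnit_mk'_iff O P y s).mpr hy)⟩

lemma exists_residueField_equiv {L : Type*} [Field L] {φ : R →+* L} (hP : RingHom.ker φ = P)
    (hgen : ∀ S : Subfield L, (∀ r, φ r ∈ S) → S = ⊤) :
    ∃ e : P.ResidueField ≃+* L, ∀ r, e (algebraMap R P.ResidueField r) = φ r := by
  let lift : P.ResidueField →+* L := Ideal.ResidueField.lift P φ hP.ge fun r (hr : r ∉ P) =>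
    IsUnit.mk0 (φ r) fun h => hr (hP.le h)
  have hlift (r : R) : lift (algebraMap R P.ResidueField r) = φ r :=
    Ideal.ResidueField.lift_algebraMap ..
  have hsurj : Function.Surjective lift :=
    RingHom.fieldRange_eq_top_iff.mp (hgen _ fun r => ⟨_, hlift r⟩)
  exact ⟨.ofBijective lift ⟨lift.injective, hsurj⟩, hlift⟩

variable {Λ : Type*} [CommGroup Λ] {V : Submonoid Λ} {ι : V →* R} (O : Type*) [CommRing O]
  [Algebra R O] [IsLocalization.AtPrime O P]

lemma exists_isDomain_valuationRing_of_isLocalization_atPrime (hV : ∀ x, x ∈ V ∨ x⁻¹ ∈ V)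
    (hι : ∀ v, ι v ∈ nonZeroDivisors R) (hfactor : ∀ r, r = 0 ∨ ∃ v, ∃ y ∉ P, r = ι v * y) :
    ∃ _ : IsDomain O, ValuationRing O := by
  have := IsLocalization.AtPrime.nontrivial O P
  have := total_dvd_of_mem_or_inv_mem hV
  have hassoc (x : O) (hx : x ≠ 0) : ∃ v, Associated x ((algebraMap R O).toMonoidHom.comp ι v) :=
    exists_associated_of_isLocalization_atPrime hfactor hx
  have hdom : IsDomain O := isDomain_of_associated_monoidHom (fun v => nonZeroDivisors.ne_zero
    (IsLocalization.map_nonZeroDivisors_le P.primeCompl O ⟨_, hι v, rfl⟩)) hassoc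
  exact ⟨hdom, valuationRing_of_associated_monoidHom hassoc⟩

lemma exists_valueGroup_equiv_of_isLocalization_atPrime (hV : ∀ x, x ∈ V ∨ x⁻¹ ∈ V)
    (hι : ∀ v, ι v ∈ nonZeroDivisors R) (hιP : ∀ v, ¬IsUnit v → ι v ∈ P)
    (hfactor : ∀ r, r = 0 ∨ ∃ v, ∃ y ∉ P, r = ι v * y) {W : Subgroup Λ}
    (hW : ∀ x, x ∈ W ↔ x ∈ V ∧ x⁻¹ ∈ V) (F : Type*) [Field F] [Algebra O F]
    [IsFractionRing O F] :
    ∃ ψ : (Fˣ ⧸ (Units.map (algebraMap O F).toMonoidHom).range) ≃* Λ ⧸ W, ∀ x : Fˣ,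
      (∃ r, algebraMap O F r = x) ↔ ∃ v ∈ V, (v : Λ ⧸ W) = ψ x := by
  obtain ⟨_, _⟩ := exists_isDomain_valuationRing_of_isLocalization_atPrime O hV hι hfactor
  have : IsLocalHom ((algebraMap R O).toMonoidHom.comp ι) := ⟨fun v hv => by
    contrapose! hv
    exact fun hunit => (IsLocalization.AtPrime.isUnit_to_map_iff O P _).mp hunit (hιP v hv)⟩
  exact exists_valueGroup_equiv hV ((algebraMap R O).toMonoidHom.comp ι)
    (fun v => nonZeroDivisors.ne_zero
      (IsLocalization.map_nonZeroDivisors_le P.primeCompl O ⟨_, hι v, rfl⟩))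
    (fun x hx => exists_associated_of_isLocalization_atPrime hfactor hx) hW

end Localization

section TensorMonoidAlgebra

variable {M₀ M A B : Type*} [CommMonoid M₀] [CommMonoid M] [CommRing A] [CommRing B]
  [Algebra (MonoidAlgebra ℤ M₀) A] [Algebra (MonoidAlgebra ℤ M₀) (MonoidAlgebra ℤ M)]

variable (M₀ M A) in
/-- The monomial `1 ⊗ m` of the tensor product `A ⊗[ℤ[M₀]] ℤ[M]`, as a monoid homomorphism in
`m`. -/
noncomputable def tensorMonomial : M →* A ⊗[MonoidAlgebra ℤ M₀] MonoidAlgebra ℤ M :=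
  (Algebra.TensorProduct.includeRight (R := MonoidAlgebra ℤ M₀) (A := A)).toMonoidHom.comp
    (MonoidAlgebra.of ℤ M)

lemma tensorMonomial_apply (m : M) :
    tensorMonomial M₀ M A m = 1 ⊗ₜ[MonoidAlgebra ℤ M₀] MonoidAlgebra.of ℤ M m := rfl

lemma closure_tmul_of_eq_top :
    AddSubmonoid.closure (Set.range fun p : A × M =>
      p.1 ⊗ₜ[MonoidAlgebra ℤ M₀] MonoidAlgebra.of ℤ M p.2) = ⊤ := by
  refine eq_top_iff.mpr fun r _ => ?_
  induction r using TensorProduct.induction_on with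
  | zero => exact zero_mem _
  | add r s hr hs => exact add_mem (hr trivial) (hs trivial)
  | tmul a p =>
    induction p using MonoidAlgebra.induction_on generalizing a with
    | of m => exact AddSubmonoid.subset_closure ⟨(a, m), rfl⟩
    | add p q hp hq =>
      simpa only [TensorProduct.tmul_add] using add_mem (hp a trivial) (hq a trivial)
    | smul n p hp => simpa only [TensorProduct.smul_tmul] using hp (n • a) trivial

variable {i : M₀ → M}

lemma tmul_of_mul (hi : ∀ x, algebraMap (MonoidAlgebra ℤ M₀) (MonoidAlgebra ℤ M)
      (MonoidAlgebra.of ℤ M₀ x) = MonoidAlgebra.of ℤ M (i x))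
    (a : A) (x : M₀) (m : M) :
    (a ⊗ₜ[MonoidAlgebra ℤ M₀] MonoidAlgebra.of ℤ M (i x * m)) =
      (algebraMap _ A (MonoidAlgebra.of ℤ M₀ x) * a) ⊗ₜ MonoidAlgebra.of ℤ M m := by
  rw [map_mul, ← hi, ← Algebra.smul_def, ← Algebra.smul_def, TensorProduct.smul_tmul]

lemma exists_addMonoidHom_tmul_of
    (hi : ∀ x, algebraMap (MonoidAlgebra ℤ M₀) (MonoidAlgebra ℤ M)
      (MonoidAlgebra.of ℤ M₀ x) = MonoidAlgebra.of ℤ M (i x))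
    (α : A →+* B) {c : M → B}
    (hc : ∀ x m, c (i x * m) = α (algebraMap _ A (MonoidAlgebra.of ℤ M₀ x)) * c m) :
    ∃ θ : A ⊗[MonoidAlgebra ℤ M₀] MonoidAlgebra ℤ M →+ B,
      ∀ a m, θ (a ⊗ₜ MonoidAlgebra.of ℤ M m) = α a * c m := by
  let C : MonoidAlgebra ℤ M →+ B := MonoidAlgebra.liftNC (Int.castAddHom B) c
  have hC_of (m : M) : C (MonoidAlgebra.of ℤ M m) = c m := by simp [C]
  have hC (s : MonoidAlgebra ℤ M₀) (p : MonoidAlgebra ℤ M) :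
      C (s • p) = α (algebraMap _ A s) * C p := by
    induction s using MonoidAlgebra.induction_on with
    | of x =>
      induction p using MonoidAlgebra.induction_on with
      | of m => rw [Algebra.smul_def, hi, ← map_mul, hC_of, hC_of, hc]
      | add p q hp hq => rw [smul_add, map_add, map_add, hp, hq, mul_add]
      | smul n p hp => rw [smul_comm, map_zsmul, map_zsmul, hp, mul_smul_comm]
    | add s t hs ht => rw [add_smul, map_add, hs, ht, map_add, map_add, add_mul]
    | smul n s hs => rw [smul_assoc, map_zsmul, map_zsmul, map_zsmul, hs, smul_mul_assoc]
  refine ⟨TensorProduct.liftAddHom ((AddMonoidHom.mul.comp α.toAddMonoidHom).compl₂ C)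
    fun s a p => ?_, fun a m => ?_⟩
  · change α (s • a) * C p = α a * C (s • p)
    rw [hC, Algebra.smul_def, map_mul]
    ring
  · exact congr_arg (α a * ·) (hC_of m)

lemma exists_ringHom_tmul_of
    (hi : ∀ x, algebraMap (MonoidAlgebra ℤ M₀) (MonoidAlgebra ℤ M)
      (MonoidAlgebra.of ℤ M₀ x) = MonoidAlgebra.of ℤ M (i x))
    (α : A →+* B) {β : M →* B}
    (hαβ : ∀ x, α (algebraMap _ A (MonoidAlgebra.of ℤ M₀ x)) = β (i x)) :
    ∃ θ : A ⊗[MonoidAlgebra ℤ M₀] MonoidAlgebra ℤ M →+* B,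
      ∀ a m, θ (a ⊗ₜ MonoidAlgebra.of ℤ M m) = α a * β m := by
  let lift : MonoidAlgebra ℤ M →+* B := (MonoidAlgebra.lift ℤ B M β).toRingHom
  have hlift : α.comp (algebraMap (MonoidAlgebra ℤ M₀) A) = lift.comp (algebraMap _ _) := by
    refine MonoidAlgebra.ringHom_ext' (RingHom.ext_int _ _) (MonoidHom.ext fun x => ?_)
    change α (algebraMap _ A (MonoidAlgebra.of ℤ M₀ x)) =
      lift (algebraMap _ _ (MonoidAlgebra.of ℤ M₀ x))
    rw [hi, hαβ]
    exact (MonoidAlgebra.lift_of β _).symm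
  let _ : Algebra (MonoidAlgebra ℤ M₀) B := (α.comp (algebraMap _ A)).toAlgebra
  let α' : A →ₐ[MonoidAlgebra ℤ M₀] B := { α with commutes' := fun _ => rfl }
  let β' : MonoidAlgebra ℤ M →ₐ[MonoidAlgebra ℤ M₀] B :=
    { lift with commutes' := fun s => congr($hlift.symm s) }
  refine ⟨(Algebra.TensorProduct.productMap α' β').toRingHom, fun a m => ?_⟩
  exact congr_arg (α a * ·) (MonoidAlgebra.lift_of β m)

end TensorMonoidAlgebra

section ValuativeExtension

variable {A K Λ : Type*} [CommRing A] [Field K] [Algebra A K] [CommGroup Λ]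

variable (A) in
/-- `V` is a valuative submonoid of the abelian group `Λ ⊇ Kˣ` with `V ∩ Kˣ = A ∖ {0}`, the
inclusion of `Kˣ` into `Λ` being an injective homomorphism `f`. -/
structure IsValuativeExtension (f : Kˣ →* Λ) (V : Submonoid Λ) : Prop where
  injective : Function.Injective f
  mem_or_inv_mem : ∀ x, x ∈ V ∨ x⁻¹ ∈ V
  map_mem_iff : ∀ u, f u ∈ V ↔ ∃ a, algebraMap A K a = u

variable (A) in
/-- The algebra structures `ℤ[V₀] → A` and `ℤ[V₀] → ℤ[V]` are the ones induced by the inclusions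
of `V₀ = A ∖ {0}` into `A` and `V`; here `V₀` is seen in `Λ` through `f : Kˣ →* Λ`. -/
structure IsInducedByInclusion (f : Kˣ →* Λ) {V₀ V : Submonoid Λ} (hle : V₀ ≤ V)
    [Algebra (MonoidAlgebra ℤ V₀) A] [Algebra (MonoidAlgebra ℤ V₀) (MonoidAlgebra ℤ V)] :
    Prop where
  exists_algebraMap_of_eq : ∀ (a : A) (u : Kˣ), algebraMap A K a = u →
    ∃ x : V₀, x = f u ∧ algebraMap (MonoidAlgebra ℤ V₀) A (.of ℤ V₀ x) = a
  exists_algebraMap_algebraMap_of_eq : ∀ x : V₀, ∃ u : Kˣ,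
    f u = x ∧ algebraMap A K (algebraMap (MonoidAlgebra ℤ V₀) A (.of ℤ V₀ x)) = u
  algebraMap_of : ∀ x, algebraMap (MonoidAlgebra ℤ V₀) (MonoidAlgebra ℤ V) (.of ℤ V₀ x) =
    .of ℤ V (Submonoid.inclusion hle x)

variable {f : Kˣ →* Λ} {V₀ V : Submonoid Λ}

lemma IsValuativeExtension.of_dominates [IsDomain A] [ValuationRing A] [IsFractionRing A K]
    (hf : Function.Injective f)
    (hV₀ : V₀ = ((algebraMap A K).range.toSubmonoid.comap (Units.coeHom K)).map f)
    (hV : ∀ x, x ∈ V ∨ x⁻¹ ∈ V) (hle : V₀ ≤ V)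
    (hdom : {x : Λ | x ∈ V ∧ x⁻¹ ∈ V} ∩ V₀ = {x : Λ | x ∈ V₀ ∧ x⁻¹ ∈ V₀}) :
    IsValuativeExtension A f V := by
  have hmem (u : Kˣ) : f u ∈ V₀ ↔ ∃ a, algebraMap A K a = u := by
    rw [hV₀, Submonoid.mem_map_iff_mem hf]
    rfl
  refine ⟨hf, hV, fun u => ⟨fun hu => ?_, fun hu => hle ((hmem u).mpr hu)⟩⟩
  obtain h | h := ValuationRing.isInteger_or_isInteger A (u : K)
  · exact h
  · have hinv : f u⁻¹ ∈ V₀ := (hmem _).mpr (h.imp fun _ ha => by simpa using ha)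
    have hunit : f u⁻¹ ∈ {x : Λ | x ∈ V₀ ∧ x⁻¹ ∈ V₀} :=
      hdom ▸ ⟨⟨hle hinv, by simpa using hu⟩, hinv⟩
    exact (hmem u).mp (by simpa using hunit.2)

lemma extend_units_val_mul (hf : Function.Injective f) (u : Kˣ) (x : Λ) :
    Function.extend f Units.val 0 (f u * x) = u * Function.extend f Units.val 0 x := by
  by_cases hx : ∃ u', f u' = x
  · obtain ⟨u', rfl⟩ := hx
    rw [← map_mul, hf.extend_apply, hf.extend_apply, Units.val_mul]
  · have hux : ¬∃ u', f u' = f u * x := fun ⟨u', hu'⟩ =>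
      hx ⟨u⁻¹ * u', by rw [map_mul, hu', map_inv, inv_mul_cancel_left]⟩
    simp [Function.extend_apply' _ _ _ hx, Function.extend_apply' _ _ _ hux]

variable {hle : V₀ ≤ V} [Algebra (MonoidAlgebra ℤ V₀) A]
  [Algebra (MonoidAlgebra ℤ V₀) (MonoidAlgebra ℤ V)]

lemma IsInducedByInclusion.of_algebraMap_of
    (hV₀ : V₀ = ((algebraMap A K).range.toSubmonoid.comap (Units.coeHom K)).map f)
    (hA : ∀ (x : V₀) (u : Kˣ) (a : A), f u = x → algebraMap A K a = u →
      algebraMap (MonoidAlgebra ℤ V₀) A (.of ℤ V₀ x) = a)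
    (hM : ∀ x, algebraMap (MonoidAlgebra ℤ V₀) (MonoidAlgebra ℤ V) (.of ℤ V₀ x) =
      .of ℤ V (Submonoid.inclusion hle x)) :
    IsInducedByInclusion A f hle where
  exists_algebraMap_of_eq a u ha :=
    ⟨⟨f u, hV₀ ▸ ⟨u, ⟨a, ha⟩, rfl⟩⟩, rfl, hA _ u a rfl ha⟩
  exists_algebraMap_algebraMap_of_eq x := by
    obtain ⟨u, ⟨a, ha⟩, hu⟩ := hV₀.le x.2
    exact ⟨u, hu, by rw [hA x u a hu ha]; exact ha⟩
  algebraMap_of := hM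

namespace IsInducedByInclusion

lemma tmul_of_eq_tensorMonomial (h : IsInducedByInclusion A f hle) {a : A} {u : Kˣ}
    (ha : algebraMap A K a = u) {v w : V} (hw : f u * v = w) :
    a ⊗ₜ MonoidAlgebra.of ℤ V v = tensorMonomial V₀ V A w := by
  obtain ⟨x, hx, rfl⟩ := h.exists_algebraMap_of_eq a u ha
  have hxv : Submonoid.inclusion hle x * v = w :=
    Subtype.ext ((congr_arg (· * (v : Λ)) hx).trans hw)
  rw [tensorMonomial_apply, ← hxv, tmul_of_mul h.algebraMap_of, mul_one]

lemma exists_tmul_of_eq_tensorMonomial [FaithfulSMul A K] (h : IsInducedByInclusion A f hle)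
    {a : A} (ha : a ≠ 0) (v : V) :
    ∃ t : V, (t : Λ ⧸ f.range) = (v : Λ) ∧
      a ⊗ₜ MonoidAlgebra.of ℤ V v = tensorMonomial V₀ V A t := by
  let u : Kˣ := .mk0 (algebraMap A K a) (by simpa using ha)
  obtain ⟨x, hx, -⟩ := h.exists_algebraMap_of_eq a u rfl
  refine ⟨⟨f u * v, mul_mem (hx ▸ hle x.2) v.2⟩, QuotientGroup.eq.mpr ⟨u⁻¹, ?_⟩,
    h.tmul_of_eq_tensorMonomial rfl rfl⟩
  simp

lemma closure_range_tensorMonomial [FaithfulSMul A K] (h : IsInducedByInclusion A f hle) :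
    AddSubmonoid.closure (Set.range (tensorMonomial V₀ V A)) = ⊤ := by
  rw [← top_le_iff, ← closure_tmul_of_eq_top, AddSubmonoid.closure_le]
  rintro _ ⟨⟨a, v⟩, rfl⟩
  obtain rfl | ha := eq_or_ne a 0
  · simp
  · obtain ⟨t, -, ht⟩ := h.exists_tmul_of_eq_tensorMonomial ha v
    exact AddSubmonoid.subset_closure ⟨t, ht.symm⟩

lemma tensorMonomial_add [IsDomain A] [ValuationRing A] [IsFractionRing A K]
    (h : IsInducedByInclusion A f hle) {v w : V} (hvw : (v : Λ ⧸ f.range) = (w : Λ)) :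
    tensorMonomial V₀ V A v + tensorMonomial V₀ V A w = 0 ∨
      ∃ t : V, (t : Λ ⧸ f.range) = (v : Λ) ∧
        tensorMonomial V₀ V A v + tensorMonomial V₀ V A w = tensorMonomial V₀ V A t := by
  have hadd {v w : V} {a : A} {u : Kˣ} (ha : algebraMap A K a = u) (hu : f u * v = w) :
      tensorMonomial V₀ V A v + tensorMonomial V₀ V A w = 0 ∨
        ∃ t : V, (t : Λ ⧸ f.range) = (v : Λ) ∧
          tensorMonomial V₀ V A v + tensorMonomial V₀ V A w = tensorMonomial V₀ V A t := by
    rw [← h.tmul_of_eq_tensorMonomial ha hu, tensorMonomial_apply, ← TensorProduct.add_tmul]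
    obtain h0 | h0 := eq_or_ne (1 + a) 0
    · exact .inl (by rw [h0, TensorProduct.zero_tmul])
    · exact .inr (h.exists_tmul_of_eq_tensorMonomial h0 v)
  obtain ⟨u, hu⟩ := QuotientGroup.eq.mp hvw
  obtain ⟨a, ha⟩ | ⟨a, ha⟩ := ValuationRing.isInteger_or_isInteger A (u : K)
  · exact hadd ha (by rw [hu, mul_comm, mul_inv_cancel_left])
  · rw [add_comm, hvw]
    exact hadd (u := u⁻¹) (ha.trans (Units.val_inv_eq_inv_val u).symm) (by simp [hu])

/- A functional on the tensor product which is nonzero on exactly those `1 ⊗ v` with `v` in the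
class of `g i₀` modulo `Kˣ` kills all the summands but one. -/
lemma sum_tensorMonomial_ne_zero (h : IsInducedByInclusion A f hle) (hf : Function.Injective f)
    {ι : Type*} {s : Finset ι} (hs : s.Nonempty) {g : ι → V}
    (hg : Set.InjOn (fun i => (g i : Λ ⧸ f.range)) s) :
    ∑ i ∈ s, tensorMonomial V₀ V A (g i) ≠ 0 := by
  obtain ⟨i₀, hi₀⟩ := hs
  let c : Λ → K := Function.extend f Units.val 0
  obtain ⟨θ, hθ⟩ := exists_addMonoidHom_tmul_of h.algebraMap_of (algebraMap A K)
    (c := fun v : V => c ((v : Λ) * (g i₀ : Λ)⁻¹)) fun x v => by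
      obtain ⟨u, hu, hau⟩ := h.exists_algebraMap_algebraMap_of_eq x
      rw [hau, ← extend_units_val_mul hf, hu, ← mul_assoc]
      rfl
  have hother (i) (hi : i ∈ s) (hne : i ≠ i₀) : θ (tensorMonomial V₀ V A (g i)) = 0 := by
    rw [tensorMonomial_apply, hθ, map_one, one_mul]
    refine Function.extend_apply' _ _ _ fun ⟨u, hu⟩ => hne (hg hi hi₀ ?_)
    have hmem : (g i₀ : Λ)⁻¹ * g i ∈ f.range := ⟨u, by rw [hu, mul_comm]⟩
    exact (QuotientGroup.eq.mpr hmem).symm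
  have hone : c 1 = 1 := by simpa [c] using hf.extend_apply Units.val 0 1
  refine ne_zero_of_map (f := θ) ?_
  rw [map_sum, Finset.sum_eq_single_of_mem i₀ hi₀ hother, tensorMonomial_apply, hθ]
  simp [hone]

end IsInducedByInclusion

end ValuativeExtension

section ResidueField

open IsLocalRing

variable {A K Λ σ : Type*} [CommRing A] [Field K] [Algebra A K] [CommGroup Λ]
  {f : Kˣ →* Λ} {V₀ V : Submonoid Λ} {W UA : Subgroup Λ}

lemma sum_ne_zero_of_injOn_quotient_range {k : Type*} [Field k]
    (hW : ∀ x, x ∈ W ↔ x ∈ V ∧ x⁻¹ ∈ V) (hUA : UA ≤ f.range)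
    {e : W ⧸ UA.subgroupOf W ≃* Multiplicative (σ →₀ ℤ)}
    {ψ : V → FractionRing (MvPolynomial σ k)} (hψ_zero : ∀ v, ¬IsUnit v → ψ v = 0)
    (hψ : ∀ w : W, ∃ c : kˣ,
      ψ ⟨w, ((hW w).mp w.2).1⟩ = algebraMap k _ c * laurentMonomial σ k (e w))
    {s : Finset V} (hs : 1 ∈ s) (hinj : Set.InjOn (fun v : V => ((v : Λ) : Λ ⧸ f.range)) s) :
    ∑ v ∈ s, ψ v ≠ 0 := by
  refine sum_ne_zero_of_eq_algebraMap_mul_laurentMonomial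
    (i := fun w : W => (⟨w, ((hW w).mp w.2).1⟩ : V)) (w := 1) (fun w w' hww' => ?_) hψ
    (fun v hv => hψ_zero v fun hunit => hv ⟨⟨v, (isUnit_iff_mem hW v).mp hunit⟩, rfl⟩) hs
    fun w hw w' hw' hww' => ?_
  · exact Subtype.ext congr(($hww' : Λ))
  · have hmem := Subgroup.mem_subgroupOf.mp (QuotientGroup.eq.mp (e.injective hww'))
    have := hinj hw hw' (QuotientGroup.eq.mpr (hUA hmem))
    exact Subtype.ext congr(($this : Λ))

lemma IsValuativeExtension.exists_units_hom [FaithfulSMul A K] (h : IsValuativeExtension A f V)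
    (hW : ∀ x, x ∈ W ↔ x ∈ V ∧ x⁻¹ ∈ V)
    (hUA : ∀ x, x ∈ UA ↔ ∃ u : Kˣ, (∃ a : Aˣ, algebraMap A K a = u) ∧ f u = x) :
    ∃ j : Aˣ →* W, Function.Injective j ∧ j.range = UA.subgroupOf W ∧
      ∀ a, (j a : Λ) = f (Units.map (algebraMap A K).toMonoidHom a) := by
  let F : Aˣ →* Λ := f.comp (Units.map (algebraMap A K).toMonoidHom)
  have hFV (a : Aˣ) : F a ∈ V := (h.map_mem_iff _).mpr ⟨a, rfl⟩
  have hFW (a : Aˣ) : F a ∈ W := (hW _).mpr ⟨hFV a, map_inv F a ▸ hFV a⁻¹⟩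
  have hF : Function.Injective F :=
    h.injective.comp (Units.map_injective (FaithfulSMul.algebraMap_injective A K))
  refine ⟨F.codRestrict W hFW, (MonoidHom.injective_codRestrict F W hFW).mpr hF, ?_, fun _ => rfl⟩
  ext w
  rw [Subgroup.mem_subgroupOf, hUA]
  refine ⟨fun ⟨a, ha⟩ => ⟨_, ⟨a, rfl⟩, congr_arg Subtype.val ha⟩, fun ⟨u, ⟨a, ha⟩, hu⟩ => ⟨a, ?_⟩⟩
  have hau : Units.map (algebraMap A K).toMonoidHom a = u := Units.ext ha
  exact Subtype.ext ((congr_arg f hau).trans hu)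

variable [IsLocalRing A]

lemma IsValuativeExtension.exists_residueCharacter [FaithfulSMul A K]
    (h : IsValuativeExtension A f V)
    (hW : ∀ x, x ∈ W ↔ x ∈ V ∧ x⁻¹ ∈ V)
    (hUA : ∀ x, x ∈ UA ↔ ∃ u : Kˣ, (∃ a : Aˣ, algebraMap A K a = u) ∧ f u = x)
    (e : W ⧸ UA.subgroupOf W ≃* Multiplicative (σ →₀ ℤ)) :
    ∃ β : V →* FractionRing (MvPolynomial σ (ResidueField A)),
      (∀ (v : V) (a : A) (u : Kˣ), algebraMap A K a = u → f u = v →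
        β v = algebraMap (ResidueField A) _ (residue A a)) ∧
      (∀ v, ¬IsUnit v → β v = 0) ∧
      ∀ w : W, ∃ c : (ResidueField A)ˣ, β ⟨w, ((hW w).mp w.2).1⟩ =
        algebraMap (ResidueField A) _ c * laurentMonomial σ (ResidueField A) (e w) := by
  obtain ⟨j, hj, hjUA, hjf⟩ := h.exists_units_hom hW hUA
  obtain ⟨Φ, hΦj, hΦ⟩ := exists_monoidHom_extending_eq_mul_laurentMonomial hj hjUA e
    (Units.map (residue A).toMonoidHom)
  let ρ : Vˣ →* W := (V.subtype.comp (Units.coeHom V)).codRestrict W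
    fun v => (isUnit_iff_mem hW _).mp v.isUnit
  let β := MulChar.ofUnitHom (Φ.comp ρ)
  have hβ {v : V} {w : W} (hvw : (v : Λ) = w) : β v = Φ w := by
    obtain ⟨y, rfl⟩ := (isUnit_iff_mem hW v).mpr (hvw ▸ w.2)
    rw [MulChar.ofUnitHom_coe, MonoidHom.comp_apply, show ρ y = w from Subtype.ext hvw]
  refine ⟨β.toMonoidHom, fun v a u ha hu => ?_, fun v => β.map_nonunit, fun w => ?_⟩
  · by_cases hunit : IsUnit a
    · obtain ⟨a, rfl⟩ := hunit
      have hau : Units.map (algebraMap A K).toMonoidHom a = u := Units.ext ha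
      exact (hβ (w := j a) (by rw [hjf, hau, hu])).trans (hΦj a)
    · rw [(residue_eq_zero_iff a).mpr hunit, map_zero]
      refine β.map_nonunit fun hv => hunit ?_
      rw [isUnit_iff_inv_mem, ← hu, ← map_inv, h.map_mem_iff] at hv
      obtain ⟨b, hb⟩ := hv
      refine .of_mul_eq_one b (FaithfulSMul.algebraMap_injective A K ?_)
      rw [map_mul, ha, hb, Units.mul_inv, map_one]
  · obtain ⟨c, hc⟩ := hΦ w
    exact ⟨c, (hβ rfl).trans hc⟩

variable {hle : V₀ ≤ V} [Algebra (MonoidAlgebra ℤ V₀) A]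
  [Algebra (MonoidAlgebra ℤ V₀) (MonoidAlgebra ℤ V)]

lemma IsInducedByInclusion.exists_residueHom [FaithfulSMul A K]
    (h : IsInducedByInclusion A f hle) (hV : IsValuativeExtension A f V)
    (hW : ∀ x, x ∈ W ↔ x ∈ V ∧ x⁻¹ ∈ V)
    (hUA : ∀ x, x ∈ UA ↔ ∃ u : Kˣ, (∃ a : Aˣ, algebraMap A K a = u) ∧ f u = x)
    (e : W ⧸ UA.subgroupOf W ≃* Multiplicative (σ →₀ ℤ)) :
    ∃ φ : A ⊗[MonoidAlgebra ℤ V₀] MonoidAlgebra ℤ V →+*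
        FractionRing (MvPolynomial σ (ResidueField A)),
      (∀ a, φ (a ⊗ₜ 1) = algebraMap (ResidueField A) _ (residue A a)) ∧
      (∀ v, ¬IsUnit v → φ (tensorMonomial V₀ V A v) = 0) ∧
      ∀ w : W, ∃ c : (ResidueField A)ˣ,
        φ (tensorMonomial V₀ V A ⟨w, ((hW w).mp w.2).1⟩) =
          algebraMap (ResidueField A) _ c * laurentMonomial σ (ResidueField A) (e w) := by
  obtain ⟨β, hβA, hβ⟩ := hV.exists_residueCharacter hW hUA e
  obtain ⟨φ, hφ⟩ := exists_ringHom_tmul_of h.algebraMap_of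
    ((algebraMap (ResidueField A) _).comp (residue A)) (β := β)
    fun x => by
      obtain ⟨u, hu, ha⟩ := h.exists_algebraMap_algebraMap_of_eq x
      exact (hβA _ _ u ha hu).symm
  have hφβ (v : V) : φ (tensorMonomial V₀ V A v) = β v := by
    rw [tensorMonomial_apply, hφ, map_one, one_mul]
  refine ⟨φ, fun a => ?_, ?_⟩
  · rw [← map_one (MonoidAlgebra.of ℤ V), hφ, map_one, mul_one]
    rfl
  · simpa only [hφβ] using hβ

lemma subfield_eq_top_of_residueHom_mem {R G : Type*} [Semiring R]
    {φ : R →+* FractionRing (MvPolynomial σ (ResidueField A))} {α : A → R}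
    (hα : ∀ a, φ (α a) = algebraMap (ResidueField A) _ (residue A a))
    {i : G → R} {e : G → Multiplicative (σ →₀ ℤ)} (he : Function.Surjective e)
    (hi : ∀ w, ∃ c : (ResidueField A)ˣ,
      φ (i w) = algebraMap (ResidueField A) _ c * laurentMonomial σ (ResidueField A) (e w))
    {S : Subfield (FractionRing (MvPolynomial σ (ResidueField A)))}
    (hS : ∀ r, φ r ∈ S) : S = ⊤ := by
  have hk (c : ResidueField A) : algebraMap _ _ c ∈ S := by
    obtain ⟨a, rfl⟩ := residue_surjective c
    exact hα a ▸ hS (α a)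
  refine subfield_eq_top_of_algebraMap_mem_of_laurentMonomial_mem hk fun d => ?_
  obtain ⟨w, rfl⟩ := he d
  obtain ⟨c, hc⟩ := hi w
  have hc0 : algebraMap _ (FractionRing (MvPolynomial σ (ResidueField A))) c.1 ≠ 0 :=
    by simp
  rw [← mul_div_cancel_left₀ (laurentMonomial σ (ResidueField A) (e w) : FractionRing _) hc0, ← hc]
  exact div_mem (hS _) (hk c)

end ResidueField

namespace IsInducedByInclusion

variable {A K Λ : Type*} [CommRing A] [IsDomain A] [ValuationRing A] [Field K] [Algebra A K]
  [IsFractionRing A K] [CommGroup Λ] {f : Kˣ →* Λ} {V₀ V : Submonoid Λ} {hle : V₀ ≤ V}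
  [Algebra (MonoidAlgebra ℤ V₀) A] [Algebra (MonoidAlgebra ℤ V₀) (MonoidAlgebra ℤ V)]

lemma tensorMonomial_mem_nonZeroDivisors (h : IsInducedByInclusion A f hle)
    (hf : Function.Injective f) (v : V) : tensorMonomial V₀ V A v ∈
      nonZeroDivisors (A ⊗[MonoidAlgebra ℤ V₀] MonoidAlgebra ℤ V) :=
  mem_nonZeroDivisors_of_forall_sum_ne_zero
    (π := (QuotientGroup.mk' f.range).comp V.subtype) h.closure_range_tensorMonomial
    (fun _ _ => h.tensorMonomial_add) (fun _ hs => h.sum_tensorMonomial_ne_zero hf hs) v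

lemma eq_zero_or_eq_tensorMonomial_mul (h : IsInducedByInclusion A f hle)
    (hV : IsValuativeExtension A f V) {W UA : Subgroup Λ} (hW : ∀ x, x ∈ W ↔ x ∈ V ∧ x⁻¹ ∈ V)
    (hUA : UA ≤ f.range) {σ k : Type*} [Field k]
    {e : W ⧸ UA.subgroupOf W ≃* Multiplicative (σ →₀ ℤ)}
    {φ : A ⊗[MonoidAlgebra ℤ V₀] MonoidAlgebra ℤ V →+* FractionRing (MvPolynomial σ k)}
    (hφ_zero : ∀ v, ¬IsUnit v → φ (tensorMonomial V₀ V A v) = 0)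
    (hφ : ∀ w : W, ∃ c : kˣ, φ (tensorMonomial V₀ V A ⟨w, ((hW w).mp w.2).1⟩) =
      algebraMap k _ c * laurentMonomial σ k (e w))
    (r : A ⊗[MonoidAlgebra ℤ V₀] MonoidAlgebra ℤ V) :
    r = 0 ∨ ∃ v y, φ y ≠ 0 ∧ r = tensorMonomial V₀ V A v * y :=
  have := total_dvd_of_mem_or_inv_mem hV.mem_or_inv_mem
  eq_zero_or_eq_mul_of_forall_sum_ne_zero (φ := φ)
    (π := (QuotientGroup.mk' f.range).comp V.subtype) h.closure_range_tensorMonomial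
    (fun _ _ => h.tensorMonomial_add)
    (fun _ hs hinj => sum_ne_zero_of_injOn_quotient_range hW hUA hφ_zero hφ hs hinj) r

end IsInducedByInclusion

theorem tensor_monoidAlgebra_localization_valueGroup_and_residueField_general
    {A K Λ σ : Type*} [CommRing A] [IsDomain A] [ValuationRing A] [Field K] [Algebra A K]
    [IsFractionRing A K] [CommGroup Λ] {f : Kˣ →* Λ} {V₀ V : Submonoid Λ} {hle : V₀ ≤ V}
    [Algebra (MonoidAlgebra ℤ V₀) A] [Algebra (MonoidAlgebra ℤ V₀) (MonoidAlgebra ℤ V)]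
    (h : IsInducedByInclusion A f hle) (hV : IsValuativeExtension A f V) {W UA : Subgroup Λ}
    (hW : ∀ x, x ∈ W ↔ x ∈ V ∧ x⁻¹ ∈ V)
    (hUA : ∀ x, x ∈ UA ↔ ∃ u : Kˣ, (∃ a : Aˣ, algebraMap A K a = u) ∧ f u = x)
    (e : W ⧸ UA.subgroupOf W ≃* Multiplicative (σ →₀ ℤ))
    {P : Ideal (A ⊗[MonoidAlgebra ℤ V₀] MonoidAlgebra ℤ V)}
    (hP : P = Ideal.span {r | ∃ v : V, (v : Λ)⁻¹ ∉ V ∧ r = 1 ⊗ₜ MonoidAlgebra.of ℤ V v}) :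
    P.IsPrime ∧ ∀ [P.IsPrime],
      (∃ _ : IsDomain (Localization.AtPrime P), ValuationRing (Localization.AtPrime P)) ∧
      (∀ (F : Type*) [Field F] [Algebra (Localization.AtPrime P) F]
        [IsFractionRing (Localization.AtPrime P) F],
        ∃ ψ : (Fˣ ⧸ (Units.map (algebraMap (Localization.AtPrime P) F).toMonoidHom).range) ≃*
            Λ ⧸ W,
          ∀ x : Fˣ, (∃ r, algebraMap (Localization.AtPrime P) F r = x) ↔
            ∃ v ∈ V, (v : Λ ⧸ W) = ψ x) ∧
      ∃ ε : IsLocalRing.ResidueField (Localization.AtPrime P) ≃+*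
          FractionRing (MvPolynomial σ (IsLocalRing.ResidueField A)),
        ∀ a : A, ε (IsLocalRing.residue _ (algebraMap _ (Localization.AtPrime P)
            (a ⊗ₜ[MonoidAlgebra ℤ V₀] (1 : MonoidAlgebra ℤ V)))) =
          algebraMap (MvPolynomial σ (IsLocalRing.ResidueField A)) _
            (.C (IsLocalRing.residue A a)) := by
  obtain ⟨φ, hφA, hφ_zero, hφ⟩ := h.exists_residueHom hV hW hUA e
  have hUA_le : UA ≤ f.range := fun x hx => ((hUA x).mp hx).imp fun _ hu => hu.2
  have hfactor := h.eq_zero_or_eq_tensorMonomial_mul hV hW hUA_le hφ_zero hφ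
  have hker : RingHom.ker φ = P := by
    rw [hP, ker_eq_span_of_eq_zero_or_eq_mul hφ_zero hfactor]
    simp only [isUnit_iff_inv_mem]
    rfl
  have hfactorP (r) : r = 0 ∨ ∃ v, ∃ y ∉ P, r = tensorMonomial V₀ V A v * y :=
    (hfactor r).imp_right fun ⟨v, y, hy, hr⟩ => ⟨v, y, fun h => hy (hker.ge h), hr⟩
  have hreg := h.tensorMonomial_mem_nonZeroDivisors hV.injective
  refine ⟨hker ▸ RingHom.ker_isPrime φ, ?_⟩
  intro
  refine ⟨exists_isDomain_valuationRing_of_isLocalization_atPrime (Localization.AtPrime P)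
      hV.mem_or_inv_mem hreg hfactorP,
    exists_valueGroup_equiv_of_isLocalization_atPrime (Localization.AtPrime P) hV.mem_or_inv_mem
      hreg (fun v hv => hker.le (hφ_zero v hv)) hfactorP hW, ?_⟩
  obtain ⟨ε, hε⟩ := exists_residueField_equiv hker fun S hS =>
    subfield_eq_top_of_residueHom_mem hφA (e.surjective.comp (QuotientGroup.mk'_surjective _)) hφ hS
  exact ⟨ε, fun a => (hε _).trans (hφA a)⟩

/-- Let `A` be a Henselian valuation ring which is not a field, with fraction field `K` and
residue field `k`.  Let `Λ` be an abelian group containing `Kˣ` (via an injective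
homomorphism `f`) with `Λ/Kˣ` free of finite rank, and let `V` be a valuative submonoid of
`Λ` dominating the valuative submonoid `V₀ := A∖{0}` of `Kˣ`.  Let
`R := A ⊗_{ℤ[V₀]} ℤ[V]` and let `𝔭` be the ideal of `R` generated by the image of `V∖Vˣ`.
Then `𝔭` is prime and the localization `R_𝔭` is a valuation ring whose value group is
isomorphic, as an ordered abelian group, to `Λ/Vˣ` (with nonnegative cone the image of
`V`; here `W = Vˣ` is the subgroup of invertible elements of `V`), and whose residue field
is isomorphic as a `k`-algebra to the rational function field over `k` in `m` variables,
where `m` is the rank of the free abelian group `Vˣ/Aˣ` (here `UA` is the image of `Aˣ`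
in `Λ`). -/
theorem tensor_monoidAlgebra_localization_valueGroup_and_residueField
    {A K : Type} [CommRing A] [IsDomain A] [ValuationRing A] [HenselianLocalRing A]
    (hA : ¬IsField A)
    [Field K] [Algebra A K] [IsFractionRing A K]
    {Λ : Type} [CommGroup Λ] (f : Kˣ →* Λ) (hf : Function.Injective f)
    (n : ℕ) (hfree : Nonempty ((Λ ⧸ f.range) ≃* Multiplicative (Fin n → ℤ)))
    (V₀ : Submonoid Λ)
    (hV₀ : V₀ = Submonoid.map f
      (Submonoid.comap (Units.coeHom K) (algebraMap A K).range.toSubmonoid))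
    (V : Submonoid Λ) (hVval : ∀ x : Λ, x ∈ V ∨ x⁻¹ ∈ V)
    (hle : V₀ ≤ V)
    (hdom : {x : Λ | x ∈ V ∧ x⁻¹ ∈ V} ∩ (V₀ : Set Λ) = {x : Λ | x ∈ V₀ ∧ x⁻¹ ∈ V₀})
    (W : Subgroup Λ) (hW : ∀ x : Λ, x ∈ W ↔ x ∈ V ∧ x⁻¹ ∈ V)
    (UA : Subgroup Λ)
    (hUA : ∀ x : Λ, x ∈ UA ↔ ∃ u : Kˣ,
      (∃ a : Aˣ, algebraMap A K ((a : A)) = (u : K)) ∧ f u = x)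
    (m : ℕ)
    (hm : Nonempty ((↥W ⧸ UA.subgroupOf W) ≃* Multiplicative (Fin m → ℤ))) :
    ∀ [instA : Algebra (MonoidAlgebra ℤ ↥V₀) A],
      (∀ (x : ↥V₀) (u : Kˣ) (a : A), f u = (x : Λ) → algebraMap A K a = (u : K) →
        algebraMap (MonoidAlgebra ℤ ↥V₀) A (MonoidAlgebra.of ℤ ↥V₀ x) = a) →
    ∀ [instM : Algebra (MonoidAlgebra ℤ ↥V₀) (MonoidAlgebra ℤ ↥V)],
      (∀ x : ↥V₀, algebraMap (MonoidAlgebra ℤ ↥V₀) (MonoidAlgebra ℤ ↥V)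
          (MonoidAlgebra.of ℤ ↥V₀ x) = MonoidAlgebra.of ℤ ↥V (Submonoid.inclusion hle x)) →
    ∀ 𝔭 : Ideal (A ⊗[MonoidAlgebra ℤ ↥V₀] MonoidAlgebra ℤ ↥V),
      𝔭 = Ideal.span {r : A ⊗[MonoidAlgebra ℤ ↥V₀] MonoidAlgebra ℤ ↥V | ∃ v : ↥V,
          ((v : Λ)⁻¹ ∉ V) ∧
          r = (1 : A) ⊗ₜ[MonoidAlgebra ℤ ↥V₀] MonoidAlgebra.of ℤ ↥V v} →
      𝔭.IsPrime ∧
      ∀ [hp : 𝔭.IsPrime],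
        (∃ hd : IsDomain (Localization.AtPrime 𝔭),
          @ValuationRing (Localization.AtPrime 𝔭) _ hd) ∧
        (∀ (F : Type) [Field F] [Algebra (Localization.AtPrime 𝔭) F]
          [IsFractionRing (Localization.AtPrime 𝔭) F],
          ∃ ψ : (Fˣ ⧸ (Units.map
              (algebraMap (Localization.AtPrime 𝔭) F).toMonoidHom).range) ≃* (Λ ⧸ W),
            ∀ x : Fˣ,
              ((∃ r : Localization.AtPrime 𝔭,
                  algebraMap (Localization.AtPrime 𝔭) F r = (x : F)) ↔
                ∃ v ∈ V, (QuotientGroup.mk v : Λ ⧸ W) = ψ (QuotientGroup.mk x))) ∧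
        (∃ e : IsLocalRing.ResidueField (Localization.AtPrime 𝔭) ≃+*
            FractionRing (MvPolynomial (Fin m) (IsLocalRing.ResidueField A)),
          ∀ a : A,
            e (IsLocalRing.residue (Localization.AtPrime 𝔭)
                (algebraMap (A ⊗[MonoidAlgebra ℤ ↥V₀] MonoidAlgebra ℤ ↥V)
                  (Localization.AtPrime 𝔭)
                  (a ⊗ₜ[MonoidAlgebra ℤ ↥V₀] (1 : MonoidAlgebra ℤ ↥V)))) =
              algebraMap (MvPolynomial (Fin m) (IsLocalRing.ResidueField A))
                (FractionRing (MvPolynomial (Fin m) (IsLocalRing.ResidueField A)))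
                (MvPolynomial.C (IsLocalRing.residue A a))) := by
  intro _ hact _ hincl 𝔭 h𝔭
  obtain ⟨e⟩ := hm
  exact tensor_monoidAlgebra_localization_valueGroup_and_residueField_general
    (.of_algebraMap_of hV₀ hact hincl) (.of_dominates hf hV₀ hVval hle hdom) hW hUA
    (e.trans (AddEquiv.toMultiplicative
      (Finsupp.linearEquivFunOnFinite ℤ ℤ (Fin m)).symm.toAddEquiv)) h𝔭
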